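/- arXiv:1305.3711 — 3 statements merged into one kernel-verified Lean document; each statement's English description precedes it below -/
import Mathlib

section
/- For every n ∈ ℕ and every real α > 1, the Fisher information of the Rakhmanov density of the orthonormal Laguerre polynomial equals F[ρ_{n,α}] = ((2n+1)α + 1)/(α² − 1); equivalently, the Fisher length is (δx)_{n,α} = √((α² − 1)/((2n+1)α + 1)). -/
open MeasureTheory Real

/-- The generalized Laguerre polynomial `L_n^{(α)}`. -/
noncomputable def laguerreL (α : ℝ) (n : ℕ) (x : ℝ) : ℝ :=
  ∑ k ∈ Finset.range (n + 1),
    (-1) ^ k * Real.Gamma ((n : ℝ) + α + 1) /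
      (Real.Gamma ((k : ℝ) + α + 1) * ((n - k).factorial : ℝ) * (k.factorial : ℝ)) * x ^ k

/-- The Rakhmanov density of the orthonormal Laguerre polynomial
`p_n^{(α)}(x) = (n!/Γ(n+α+1))^{1/2} L_n^{(α)}(x)`, i.e.
`ρ_{n,α}(x) = p_n^{(α)}(x)^2 x^α e^{-x}`. -/
noncomputable def laguerreρ (α : ℝ) (n : ℕ) (x : ℝ) : ℝ :=
  ((n.factorial : ℝ) / Real.Gamma ((n : ℝ) + α + 1)) * (laguerreL α n x) ^ 2 *
    x ^ α * Real.exp (-x)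

open Polynomial in
lemma lag_integrable (a : ℝ) (ha : 0 < a) (p : ℝ[X]) :
    IntegrableOn (fun x : ℝ => Real.exp (-x) * x ^ (a - 1) * p.eval x) (Set.Ioi 0) := by
  induction p using Polynomial.induction_on' with
  | add p q hp hq =>
    refine (hp.add hq).congr_fun ?_ measurableSet_Ioi
    intro x _
    simp [mul_add]
  | monomial n c =>
    have h : IntegrableOn (fun x : ℝ => c * (Real.exp (-x) * x ^ (a + n - 1))) (Set.Ioi 0) :=
      (Real.GammaIntegral_convergent (s := a + n) (by positivity)).const_mul c
    refine h.congr_fun ?_ measurableSet_Ioi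
    intro x hx
    have hx : (0:ℝ) < x := hx
    have : x ^ (a + n - 1) = x ^ (a - 1) * x ^ n := by
      rw [← Real.rpow_natCast, ← Real.rpow_add hx]; ring_nf
    simp only [eval_monomial, this]; ring

open Polynomial in
/-- Integration of a polynomial against the Gamma weight. -/
noncomputable def lagM (a : ℝ) (ha : 0 < a) : ℝ[X] →ₗ[ℝ] ℝ where
  toFun p := ∫ x in Set.Ioi (0:ℝ), Real.exp (-x) * x ^ (a - 1) * p.eval x
  map_add' p q := by
    rw [← integral_add (lag_integrable a ha p) (lag_integrable a ha q)]
    simp [mul_add]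
  map_smul' c p := by
    simp only [RingHom.id_apply, smul_eq_mul]
    rw [← integral_const_mul]
    congr 1; ext x; simp; ring

open Polynomial in
lemma lagM_apply (a : ℝ) (ha : 0 < a) (p : ℝ[X]) :
    lagM a ha p = ∫ x in Set.Ioi (0:ℝ), Real.exp (-x) * x ^ (a - 1) * p.eval x := rfl

open Polynomial in
lemma lagM_C_mul (a : ℝ) (ha : 0 < a) (c : ℝ) (p : ℝ[X]) :
    lagM a ha (C c * p) = c * lagM a ha p := by
  rw [← smul_eq_C_mul, map_smul, smul_eq_mul]

open Polynomial in
lemma lagM_X_pow (a : ℝ) (ha : 0 < a) (k : ℕ) :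
    lagM a ha (X ^ k) = Real.Gamma (k + a) := by
  rw [lagM_apply, Real.Gamma_eq_integral (by positivity)]
  refine setIntegral_congr_fun measurableSet_Ioi ?_
  intro x hx
  have hx : (0:ℝ) < x := hx
  have : x ^ (k + a - 1) = x ^ (a - 1) * x ^ k := by
    rw [← Real.rpow_natCast, ← Real.rpow_add hx]; ring_nf
  simp only [eval_pow, eval_X, this]; ring

open Polynomial in
lemma lagM_shift (a : ℝ) (ha : 0 < a) (ha' : 0 < a + 1) (p : ℝ[X]) :
    lagM (a + 1) ha' p = lagM a ha (X * p) := by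
  rw [lagM_apply, lagM_apply]
  refine setIntegral_congr_fun measurableSet_Ioi ?_
  intro x hx
  have hx : (0:ℝ) < x := hx
  have : x ^ (a + 1 - 1) = x ^ (a - 1) * x := by
    nth_rewrite 3 [← Real.rpow_one x]
    rw [← Real.rpow_add hx]; ring_nf
  simp only [eval_mul, eval_X, this]; ring

open Polynomial in
lemma lagM_ibp (a : ℝ) (ha : 0 < a) (p : ℝ[X]) :
    lagM a ha (X * derivative p) = lagM a ha ((X - C a) * p) := by
  induction p using Polynomial.induction_on' with
  | add p q hp hq => simp only [mul_add, map_add, hp, hq]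
  | monomial k c =>
    have e1 : X * derivative (monomial k c : ℝ[X]) = C (c * k) * X ^ k := by
      rw [derivative_monomial]
      cases k with
      | zero => simp
      | succ k =>
        rw [← C_mul_X_pow_eq_monomial]; simp only [Nat.add_sub_cancel]; ring
    have e2 : (X - C a) * (monomial k c : ℝ[X]) = C c * X ^ (k + 1) - C (a * c) * X ^ k := by
      rw [← C_mul_X_pow_eq_monomial, C_mul]; ring
    rw [e1, e2, map_sub, lagM_C_mul, lagM_C_mul, lagM_C_mul, lagM_X_pow, lagM_X_pow]
    have : ((k + 1 : ℕ) : ℝ) + a = (k + a) + 1 := by push_cast; ring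
    rw [this, Real.Gamma_add_one (by positivity)]
    ring

open Polynomial in
/-- The Laguerre polynomial as a polynomial. -/
noncomputable def lagP (α : ℝ) (n : ℕ) : ℝ[X] :=
  ∑ k ∈ Finset.range (n + 1),
    C ((-1) ^ k * Real.Gamma ((n : ℝ) + α + 1) /
      (Real.Gamma ((k : ℝ) + α + 1) * ((n - k).factorial : ℝ) * (k.factorial : ℝ))) * X ^ k

open Polynomial in
lemma lagP_eval (α : ℝ) (n : ℕ) (x : ℝ) : (lagP α n).eval x = laguerreL α n x := by
  simp [lagP, laguerreL, eval_finsetSum]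

open Polynomial in
lemma lagP_coeff (α : ℝ) (n k : ℕ) : (lagP α n).coeff k = if k ≤ n then
    (-1) ^ k * Real.Gamma ((n : ℝ) + α + 1) /
      (Real.Gamma ((k : ℝ) + α + 1) * ((n - k).factorial : ℝ) * (k.factorial : ℝ)) else 0 := by
  simp only [lagP, finsetSum_coeff, coeff_C_mul_X_pow]
  rw [Finset.sum_ite_eq]
  simp

open Polynomial in
lemma lagP_rec (α : ℝ) (hα : 0 < α) (n k : ℕ) :
    ((k : ℝ) + 1) * (k + α + 1) * (lagP α n).coeff (k + 1) = (k - n) * (lagP α n).coeff k := by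
  rw [lagP_coeff, lagP_coeff]
  rcases lt_trichotomy k n with h | h | h
  · obtain ⟨d, rfl⟩ : ∃ d, n = k + 1 + d := ⟨n - (k + 1), by omega⟩
    rw [if_pos (by omega), if_pos (by omega)]
    have h1 : k + 1 + d - (k + 1) = d := by omega
    have h2 : k + 1 + d - k = d + 1 := by omega
    rw [h1, h2]
    have h3 : ((k + 1 : ℕ) : ℝ) + α + 1 = (k + α + 1) + 1 := by push_cast; ring
    rw [h3, Real.Gamma_add_one (s := k + α + 1) (by positivity), Nat.factorial_succ, Nat.factorial_succ]
    have g1 : Real.Gamma (k + α + 1) ≠ 0 := (Real.Gamma_pos_of_pos (by positivity)).ne'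
    have g2 : (d.factorial : ℝ) ≠ 0 := by positivity
    have g3 : (k.factorial : ℝ) ≠ 0 := by positivity
    have g4 : (k + α + 1 : ℝ) ≠ 0 := by positivity
    push_cast
    have g5 : (k + 1 : ℝ) ≠ 0 := by positivity
    have g6 : (d + 1 : ℝ) ≠ 0 := by positivity
    generalize Real.Gamma (k + α + 1) = G1 at *
    generalize Real.Gamma _ = G2 at *
    field_simp
    ring
  · subst h
    simp
  · rw [if_neg (by omega), if_neg (by omega)]; simp

open Polynomial in
lemma lagP_ode (α : ℝ) (hα : 0 < α) (n : ℕ) :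
    X * derivative (X * derivative (lagP α n)) =
      (X - C α) * (X * derivative (lagP α n)) - C (n : ℝ) * (X * lagP α n) := by
  have key : derivative (X * derivative (lagP α n)) =
      X * derivative (lagP α n) - C α * derivative (lagP α n) - C (n : ℝ) * lagP α n := by
    ext k
    have h := lagP_rec α hα n k
    simp only [coeff_derivative, coeff_X_mul, coeff_sub, coeff_C_mul]
    cases k with
    | zero =>
      simp only [mul_coeff_zero, coeff_X_zero, zero_mul] 
      push_cast at *
      linear_combination h
    | succ k =>
      simp only [coeff_derivative, coeff_X_mul]
      push_cast at *
      linear_combination h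
  rw [key]; ring

open Polynomial in
lemma lag_moment (α : ℝ) (hα : 0 < α) (n j : ℕ) (hj : j < n) :
    lagM α hα (X ^ (j + 1) * lagP α n) = 0 := by
  have step : ∀ j : ℕ, ((n : ℝ) - j) * lagM α hα (X ^ (j + 1) * lagP α n) =
      -(j * (α + j)) * lagM α hα (X ^ j * lagP α n) := by
    intro j
    have hX : X * derivative (X ^ j : ℝ[X]) = C (j : ℝ) * X ^ j := by
      cases j with
      | zero => simp
      | succ j => rw [derivative_X_pow]; simp only [Nat.add_sub_cancel]; ring
    have h1 := lagM_ibp α hα (X ^ j * lagP α n)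
    have h2 := lagM_ibp α hα (X ^ j * (X * derivative (lagP α n)))
    have e1 : X * derivative (X ^ j * lagP α n) =
        C (j : ℝ) * (X ^ j * lagP α n) + X ^ j * (X * derivative (lagP α n)) := by
      rw [derivative_mul]; linear_combination (lagP α n) * hX
    have e2 : X * derivative (X ^ j * (X * derivative (lagP α n))) =
        C (j : ℝ) * (X ^ j * (X * derivative (lagP α n))) +
        (X - C α) * (X ^ j * (X * derivative (lagP α n)))
          - C (n : ℝ) * (X ^ (j + 1) * lagP α n) := by
      rw [derivative_mul]
      linear_combination (X * derivative (lagP α n)) * hX + X ^ j * lagP_ode α hα n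
    have e3 : (X - C α) * (X ^ j * lagP α n) =
        X ^ (j + 1) * lagP α n - C α * (X ^ j * lagP α n) := by ring
    rw [e1, e3, map_add, map_sub, lagM_C_mul, lagM_C_mul] at h1
    rw [e2, map_sub, map_add, lagM_C_mul, lagM_C_mul] at h2
    linear_combination (j:ℝ) * h1 - h2
  induction j with
  | zero =>
    have h := step 0
    have : (n : ℝ) ≠ 0 := by exact_mod_cast hj.ne'
    simpa [this] using h
  | succ j ih =>
    have h := step (j + 1)
    rw [ih (by omega), mul_zero] at h
    have : (n : ℝ) - (j + 1 : ℕ) ≠ 0 := by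
      rw [sub_ne_zero]; exact_mod_cast hj.ne'
    exact (mul_eq_zero.mp h).resolve_left this

open Polynomial in
lemma lag_orth (α : ℝ) (hα : 0 < α) (n : ℕ) (q : ℝ[X]) (hq : ∀ k, n ≤ k → q.coeff k = 0) :
    lagM α hα (X * q * lagP α n) = 0 := by
  have : X * q * lagP α n = ∑ i ∈ Finset.range (q.natDegree + 1),
      C (q.coeff i) * (X ^ (i + 1) * lagP α n) := by
    conv_lhs => rw [q.as_sum_range_C_mul_X_pow]
    rw [Finset.mul_sum, Finset.sum_mul]
    refine Finset.sum_congr rfl fun i _ => ?_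
    ring
  rw [this, map_sum]
  refine Finset.sum_eq_zero fun i _ => ?_
  rw [lagM_C_mul]
  rcases lt_or_ge i n with h | h
  · rw [lag_moment α hα n i h, mul_zero]
  · rw [hq i h, zero_mul]

lemma lag_sum (n : ℕ) : ∀ a : ℝ, 0 < a →
    ∑ k ∈ Finset.range (n + 1), (-1 : ℝ) ^ k * (n.choose k : ℝ) / (k + a) =
      n.factorial * Real.Gamma a / Real.Gamma (a + n + 1) := by
  induction n with
  | zero =>
    intro a ha
    have g := (Real.Gamma_pos_of_pos ha).ne'
    simp [Real.Gamma_add_one ha.ne']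
    field_simp
  | succ n ih =>
    intro a ha
    have h1 := ih a ha
    have h2 := ih (a + 1) (by positivity)
    have : ∑ k ∈ Finset.range (n + 1 + 1), (-1 : ℝ) ^ k * ((n + 1).choose k : ℝ) / (k + a) =
        (∑ k ∈ Finset.range (n + 1), (-1 : ℝ) ^ k * (n.choose k : ℝ) / (k + a)) -
        ∑ k ∈ Finset.range (n + 1), (-1 : ℝ) ^ k * (n.choose k : ℝ) / (k + (a + 1)) := by
      have e : ∑ k ∈ Finset.range (n + 1), (-1 : ℝ) ^ k * (n.choose k : ℝ) / (k + a) =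
          ∑ k ∈ Finset.range (n + 1 + 1), (-1 : ℝ) ^ k * (n.choose k : ℝ) / (k + a) := by
        rw [Finset.sum_range_succ _ (n + 1)]; simp
      rw [e, Finset.sum_range_succ', Finset.sum_range_succ' _ (n + 1), add_sub_right_comm,
        ← Finset.sum_sub_distrib]
      congr 1
      · refine Finset.sum_congr rfl fun k _ => ?_
        rw [Nat.choose_succ_succ]
        push_cast
        have : (k : ℝ) + (a + 1) = k + 1 + a := by ring
        rw [this, pow_succ]
        ring
      · simp
    rw [this, h1, h2, Real.Gamma_add_one ha.ne', Nat.factorial_succ]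
    have e1 : a + 1 + n + 1 = (a + n + 1) + 1 := by ring
    have e2 : a + (n + 1 : ℕ) + 1 = (a + n + 1) + 1 := by push_cast; ring
    rw [e1, e2, Real.Gamma_add_one (s := a + n + 1) (by positivity)]
    have g := (Real.Gamma_pos_of_pos (show 0 < a + n + 1 by positivity)).ne'
    have g2 : a + n + 1 ≠ 0 := by positivity
    generalize Real.Gamma (a + n + 1) = G at *
    field_simp
    push_cast
    ring

open Polynomial in
lemma lag_m0 (α : ℝ) (hα : 0 < α) (n : ℕ) : lagM α hα (lagP α n) = Real.Gamma α := by
  have h := lag_sum n α hα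
  have g := (Real.Gamma_pos_of_pos (show 0 < α + n + 1 by positivity)).ne'
  have f : (n.factorial : ℝ) ≠ 0 := by positivity
  have : lagM α hα (lagP α n) = (Real.Gamma (α + n + 1) / n.factorial) *
      ∑ k ∈ Finset.range (n + 1), (-1 : ℝ) ^ k * (n.choose k : ℝ) / (k + α) := by
    rw [lagP, map_sum, Finset.mul_sum]
    refine Finset.sum_congr rfl fun k hk => ?_
    have hk : k ≤ n := by simpa [Nat.lt_succ_iff] using hk
    rw [lagM_C_mul, lagM_X_pow, Nat.cast_choose ℝ hk, Real.Gamma_add_one (s := k + α) (by positivity)]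
    have g1 := (Real.Gamma_pos_of_pos (show 0 < k + α by positivity)).ne'
    have g2 : (k : ℝ) + α ≠ 0 := by positivity
    have g3 : (k.factorial : ℝ) ≠ 0 := by positivity
    have g4 : ((n-k).factorial : ℝ) ≠ 0 := by positivity
    rw [add_comm (n : ℝ) α]
    generalize Real.Gamma (α + n + 1) = G at *
    generalize Real.Gamma (k + α) = G1 at *
    field_simp
  rw [this, h]
  field_simp

open Polynomial in
lemma lag_A1 (α : ℝ) (hα : 0 < α) (n : ℕ) :
    lagM α hα (lagP α n * lagP α n) = Real.Gamma (n + α + 1) / (α * n.factorial) := by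
  have e : lagP α n * lagP α n = X * (lagP α n).divX * lagP α n +
      C ((lagP α n).coeff 0) * lagP α n := by
    conv_lhs => rw [← (lagP α n).divX_mul_X_add]
    conv_rhs => rw [← (lagP α n).divX_mul_X_add]
    simp only [divX_mul_X_add]
    nth_rewrite 1 [← (lagP α n).divX_mul_X_add]
    ring
  rw [e, map_add, lagM_C_mul, lag_m0, lag_orth, lagP_coeff]
  · have g := (Real.Gamma_pos_of_pos hα).ne'
    simp [Real.Gamma_add_one hα.ne']
    field_simp
  · intro k hk
    rw [coeff_divX, lagP_coeff, if_neg (by omega)]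

open Polynomial in
lemma lag_B1 (α : ℝ) (hα : 0 < α) (n : ℕ) :
    lagM α hα (lagP α n * (X * derivative (lagP α n))) = 0 := by
  have := lag_orth α hα n (derivative (lagP α n)) (by
    intro k hk
    rw [coeff_derivative, lagP_coeff, if_neg (by omega), zero_mul])
  rw [← this]; congr 1; ring

open Polynomial in
lemma lag_main (a : ℝ) (ha : 0 < a) (n : ℕ) :
    lagM a ha ((C 2 * (X * derivative (lagP (a + 1) n)) +
      (C (a + 1) - X) * lagP (a + 1) n) ^ 2) =
    Real.Gamma (n + (a + 1) + 1) / n.factorial *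
      (((2 * (n : ℝ) + 1) * (a + 1) + 1) / ((a + 1) ^ 2 - 1)) := by
  have hα : 0 < a + 1 := by positivity
  have hA1 := lag_A1 (a + 1) hα n
  have hB1 := lag_B1 (a + 1) hα n
  have ode := lagP_ode (a + 1) hα n
  rw [lagM_shift a ha] at hA1 hB1
  set u := lagP (a + 1) n with hu
  set v := X * derivative u with hv
  have i1 := lagM_ibp a ha (u * u)
  have i2 := lagM_ibp a ha (X * (u * u))
  have i3 := lagM_ibp a ha (u * v)
  have i4 := lagM_ibp a ha (X * (u * v))
  have i5 := lagM_ibp a ha (v * v)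
  have hC : (C (a + 1) : ℝ[X]) = C a + 1 := by simp
  rw [hC] at ode
  have e1 : X * derivative (u * u) = C 2 * (u * v) := by
    rw [derivative_mul, hv, show (C 2 : ℝ[X]) = 2 from rfl]; ring
  have e2 : X * derivative (X * (u * u)) = X * (u * u) + C 2 * (X * (u * v)) := by
    rw [derivative_mul, derivative_mul, hv, show (C 2 : ℝ[X]) = 2 from rfl, derivative_X]; ring
  have e3 : X * derivative (u * v) = v * v + X * (u * v) - C a * (u * v) - u * v
      - C (n : ℝ) * (X * (u * u)) := by
    rw [derivative_mul]; linear_combination u * ode - v * hv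
  have e4 : X * derivative (X * (u * v)) = X * (u * v) + X * (v * v) + X * (X * (u * v))
      - C a * (X * (u * v)) - X * (u * v) - C (n : ℝ) * (X * (X * (u * u))) := by
    rw [derivative_mul, derivative_mul, derivative_X]
    linear_combination X * u * ode - X * v * hv
  have e5 : X * derivative (v * v) = C 2 * (X * (v * v)) - C 2 * (C a * (v * v)) - C 2 * (v * v)
      - C 2 * (C (n : ℝ) * (X * (u * v))) := by
    rw [derivative_mul, show (C 2 : ℝ[X]) = 2 from rfl]; linear_combination 2 * v * ode
  have r : ∀ p : ℝ[X], lagM a ha ((X - C a) * p) = lagM a ha (X * p) - a * lagM a ha p := by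
    intro p; rw [sub_mul, map_sub, lagM_C_mul]
  rw [e1, r] at i1
  rw [e2, r] at i2
  rw [e3, r] at i3
  rw [e4, r] at i4
  rw [e5, r] at i5
  have e6 : (C 2 * v + (C (a + 1) - X) * u) ^ 2 = C 4 * (v * v) + C (4 * (a + 1)) * (u * v)
      - C 4 * (X * (u * v)) + C ((a + 1) ^ 2) * (u * u) - C (2 * (a + 1)) * (X * (u * u))
      + X * (X * (u * u)) := by
    simp only [C_mul, C_pow, C_add, C_1, show (C 2 : ℝ[X]) = 2 from rfl,
      show (C 4 : ℝ[X]) = 4 from rfl]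
    ring
  rw [e6]
  simp only [map_add, map_sub, lagM_C_mul] at i1 i2 i3 i4 i5 ⊢
  set A0 := lagM a ha (u * u)
  set A1 := lagM a ha (X * (u * u))
  set A2 := lagM a ha (X * (X * (u * u)))
  set B0 := lagM a ha (u * v)
  set B1 := lagM a ha (X * (u * v))
  set B2 := lagM a ha (X * (X * (u * v)))
  set C0 := lagM a ha (v * v)
  set C1 := lagM a ha (X * (v * v))
  have hf : (n.factorial : ℝ) ≠ 0 := by positivity
  have hG : Real.Gamma (n + (a + 1) + 1) / n.factorial = (a + 1) * A1 := by
    rw [hA1]; field_simp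
  rw [hG]
  have hd : (a + 1) ^ 2 - 1 ≠ 0 := by
    have : 0 < (a + 1) ^ 2 - 1 := by nlinarith
    exact this.ne'
  have hA2 : A2 = (a + 1) * A1 := by linarith
  have hB0 : B0 = (A1 - a * A0) / 2 := by linarith
  have hC0 : C0 = n * A1 + B0 := by linarith
  have hC1 : C1 = n * A2 := by linarith
  have hA0 : A0 * ((a + 1) ^ 2 - 1) = A1 * (2 * n + (a + 1) + 1) := by
    rw [hB1, hC0, hC1, hA2, hB0] at i5
    linear_combination 2 * i5
  rw [hC0, hB0, hB1, hA2, ← mul_div_assoc ((a + 1) * A1), eq_div_iff hd]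
  linear_combination (2 - (a + 1) ^ 2) * hA0

lemma lag_deriv (α : ℝ) (n : ℕ) (x : ℝ) (hx : 0 < x) :
    deriv (laguerreρ α n) x = ((n.factorial : ℝ) / Real.Gamma ((n : ℝ) + α + 1)) *
      (lagP α n).eval x * (2 * (x * (Polynomial.derivative (lagP α n)).eval x) +
        (α - x) * (lagP α n).eval x) * x ^ (α - 1) * Real.exp (-x) := by
  have h1 := (lagP α n).hasDerivAt x
  have h2 := Real.hasDerivAt_rpow_const (x := x) (p := α) (Or.inl hx.ne')
  have h3 : HasDerivAt (fun y : ℝ => Real.exp (-y)) (Real.exp (-x) * (-1)) x :=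
    (hasDerivAt_neg x).exp
  have h := ((((h1.pow 2).const_mul ((n.factorial : ℝ) / Real.Gamma ((n : ℝ) + α + 1))).mul
    h2).mul h3).deriv
  have e : laguerreρ α n = fun y => ((n.factorial : ℝ) / Real.Gamma ((n : ℝ) + α + 1)) *
      ((lagP α n).eval y) ^ 2 * y ^ α * Real.exp (-y) := by
    ext y; rw [lagP_eval]; rfl
  rw [e]
  refine Eq.trans h ?_
  have : x ^ α = x ^ (α - 1) * x := by
    nth_rewrite 3 [← Real.rpow_one x]
    rw [← Real.rpow_add hx]; ring_nf
  simp only [Pi.mul_apply, Pi.pow_apply]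
  rw [this]
  push_cast
  ring

lemma lag_fisher (n : ℕ) (α : ℝ) (hα : 1 < α) :
    (∫ x in Set.Ioi (0 : ℝ), (deriv (laguerreρ α n) x) ^ 2 / laguerreρ α n x) =
      ((2 * (n : ℝ) + 1) * α + 1) / (α ^ 2 - 1) := by
  obtain ⟨a, rfl⟩ : ∃ a, α = a + 1 := ⟨α - 1, by ring⟩
  have ha : 0 < a := by linarith
  have hG : 0 < Real.Gamma ((n : ℝ) + (a + 1) + 1) := Real.Gamma_pos_of_pos (by positivity)
  have hf : (0:ℝ) < n.factorial := by positivity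
  set c := (n.factorial : ℝ) / Real.Gamma ((n : ℝ) + (a + 1) + 1) with hc
  have hc0 : 0 < c := by positivity
  have hP : lagP (a + 1) n ≠ 0 := by
    intro h0
    have := lagP_coeff (a + 1) n 0
    rw [h0] at this
    have g := Real.Gamma_pos_of_pos (show 0 < a + 1 + 1 by positivity)
    simp only [Polynomial.coeff_zero, Nat.zero_le, if_true] at this
    refine absurd this (ne_of_lt ?_)
    simp only [pow_zero, Nat.cast_zero, zero_add, one_mul, Nat.sub_zero]
    positivity
  have hz : ∀ᵐ x : ℝ ∂volume, (lagP (a + 1) n).eval x ≠ 0 := by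
    have hfin : {x : ℝ | (lagP (a + 1) n).IsRoot x}.Finite :=
      Polynomial.finite_setOfPred_isRoot hP
    have h0 := hfin.measure_zero volume
    rw [ae_iff]
    convert h0 using 3
    simp [Polynomial.IsRoot]
  have hmain := lag_main a ha n
  have : (∫ x in Set.Ioi (0 : ℝ), (deriv (laguerreρ (a + 1) n) x) ^ 2 / laguerreρ (a + 1) n x) =
      c * lagM a ha ((Polynomial.C 2 * (Polynomial.X * Polynomial.derivative (lagP (a + 1) n)) +
      (Polynomial.C (a + 1) - Polynomial.X) * lagP (a + 1) n) ^ 2) := by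
    rw [lagM_apply, ← integral_const_mul]
    refine setIntegral_congr_ae measurableSet_Ioi ?_
    filter_upwards [hz] with x hx hx0
    have hx0 : 0 < x := hx0
    rw [lag_deriv _ _ _ hx0, laguerreρ, ← lagP_eval, ← hc]
    have p1 : x ^ (a + 1) = x ^ (a - 1) * x * x := by
      rw [← Real.rpow_add_one hx0.ne', ← Real.rpow_add_one hx0.ne']; ring_nf
    have p2 : x ^ (a + 1 - 1) = x ^ (a - 1) * x := by
      rw [← Real.rpow_add_one hx0.ne']; ring_nf
    rw [p1, p2]
    have q : 0 < x ^ (a - 1) := Real.rpow_pos_of_pos hx0 _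
    have q2 := Real.exp_pos (-x)
    simp only [Polynomial.eval_pow, Polynomial.eval_add, Polynomial.eval_mul, Polynomial.eval_C,
      Polynomial.eval_X, Polynomial.eval_sub]
    generalize (lagP (a + 1) n).eval x = U at *
    generalize (Polynomial.derivative (lagP (a + 1) n)).eval x = V at *
    generalize Real.exp (-x) = E at *
    generalize x ^ (a - 1) = R at *
    rw [div_eq_iff (by positivity)]
    ring
  rw [this, hmain, hc]
  field_simp

/-- For every `n ∈ ℕ` and real `α > 1`, the Fisher information of the
Rakhmanov density of the orthonormal Laguerre polynomial equals `((2n+1)α + 1)/(α² − 1)`;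
equivalently, the Fisher length is `√((α² − 1)/((2n+1)α + 1))`. -/
theorem laguerre_fisher (n : ℕ) (α : ℝ) (hα : 1 < α) :
    (∫ x in Set.Ioi (0 : ℝ), (deriv (laguerreρ α n) x) ^ 2 / laguerreρ α n x) =
      ((2 * (n : ℝ) + 1) * α + 1) / (α ^ 2 - 1) ∧
    (∫ x in Set.Ioi (0 : ℝ), (deriv (laguerreρ α n) x) ^ 2 / laguerreρ α n x) ^
        (-(1 / 2) : ℝ) =
      Real.sqrt ((α ^ 2 - 1) / ((2 * (n : ℝ) + 1) * α + 1)) := by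
  have h := lag_fisher n α hα
  refine ⟨h, ?_⟩
  rw [h]
  have h1 : 0 ≤ ((2 * (n : ℝ) + 1) * α + 1) / (α ^ 2 - 1) := by
    apply div_nonneg
    · positivity
    · nlinarith
  rw [Real.rpow_neg h1, ← Real.sqrt_eq_rpow, ← Real.sqrt_inv, inv_div]
end

section
/- For every n ∈ ℕ, the Fisher information of the Rakhmanov density of the orthonormal Jacobi polynomial with parameters α = β = 0 (the orthonormal Legendre case) equals F[ρ_{n,0,0}] = 2n(n+1)(2n+1). -/
open MeasureTheory Real

/-- The Jacobi polynomial `P_n^{(α,β)}`. -/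
noncomputable def jacobiP (α β : ℝ) (n : ℕ) (x : ℝ) : ℝ :=
  ∑ s ∈ Finset.range (n + 1),
    (Real.Gamma ((n : ℝ) + α + 1) / (Real.Gamma (α + (s : ℝ) + 1) * ((n - s).factorial : ℝ))) *
    (Real.Gamma ((n : ℝ) + β + 1) / (Real.Gamma ((n : ℝ) + β - (s : ℝ) + 1) * (s.factorial : ℝ))) *
    ((x - 1) / 2) ^ s * ((x + 1) / 2) ^ (n - s)

/-- The normalization constant `h_n` of the Jacobi polynomials. -/
noncomputable def jacobih (α β : ℝ) (n : ℕ) : ℝ :=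
  2 ^ (α + β + 1) * Real.Gamma ((n : ℝ) + α + 1) * Real.Gamma ((n : ℝ) + β + 1) /
    ((2 * (n : ℝ) + α + β + 1) * (n.factorial : ℝ) * Real.Gamma ((n : ℝ) + α + β + 1))

/-- The Rakhmanov density of the orthonormal Jacobi polynomial
`p_n^{(α,β)}(x) = h_n^{-1/2} P_n^{(α,β)}(x)`, i.e.
`ρ_{n,α,β}(x) = p_n^{(α,β)}(x)^2 (1-x)^α (1+x)^β`. -/
noncomputable def jacobiρ (α β : ℝ) (n : ℕ) (x : ℝ) : ℝ :=
  (jacobiP α β n x) ^ 2 / jacobih α β n * (1 - x) ^ α * (1 + x) ^ β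

open Polynomial in
/-- The (unscaled) Legendre polynomial `2^n P_n`. -/
noncomputable def legL (n : ℕ) : ℝ[X] :=
  ∑ s ∈ Finset.range (n + 1), C ((n.choose s : ℝ) ^ 2) * ((X - C 1) ^ s * (X + C 1) ^ (n - s))

open Polynomial in
lemma legL_rodrigues (n : ℕ) :
    C (n.factorial : ℝ) * legL n = derivative^[n] ((X - C 1) ^ n * (X + C 1) ^ n) := by
  rw [iterate_derivative_mul, legL, Finset.mul_sum]
  refine Finset.sum_congr rfl fun k hk => ?_
  have hk' : k ≤ n := by simpa [Nat.lt_succ_iff] using hk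
  rw [iterate_derivative_X_sub_pow, iterate_derivative_X_add_pow, Nat.sub_sub_self hk']
  have h : n.descFactorial (n - k) * n.descFactorial k = n.factorial * n.choose k := by
    have h1 := Nat.factorial_mul_descFactorial (Nat.sub_le n k)
    have h2 := Nat.descFactorial_eq_factorial_mul_choose n k
    rw [Nat.sub_sub_self hk'] at h1
    rw [h2, ← h1]; ring
  have h' : (n.descFactorial (n - k) : ℝ[X]) * n.descFactorial k = n.factorial * n.choose k := by
    exact_mod_cast h
  simp only [nsmul_eq_mul, map_pow, map_natCast]
  linear_combination (-(n.choose k : ℝ[X]) * ((X - C 1) ^ k * (X + C 1) ^ (n - k))) * h'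

open Polynomial in
lemma poly_ibp (p q : ℝ[X]) :
    ∫ x in (-1 : ℝ)..1, p.eval x * (derivative q).eval x =
      p.eval 1 * q.eval 1 - p.eval (-1) * q.eval (-1) -
        ∫ x in (-1 : ℝ)..1, (derivative p).eval x * q.eval x := by
  apply intervalIntegral.integral_mul_deriv_eq_deriv_mul (u := fun x => p.eval x)
    (v := fun x => q.eval x) (u' := fun x => (derivative p).eval x)
    (v' := fun x => (derivative q).eval x)
  · intro x _; exact p.hasDerivAt x
  · intro x _; exact q.hasDerivAt x
  · exact (derivative p).continuous.intervalIntegrable _ _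
  · exact (derivative q).continuous.intervalIntegrable _ _

open Polynomial in
lemma rod_orth (n : ℕ) : ∀ j ≤ n, ∀ q : ℝ[X], derivative^[j] q = 0 →
    ∫ x in (-1 : ℝ)..1, q.eval x *
      (derivative^[j] ((X - C 1) ^ n * (X + C 1) ^ n : ℝ[X])).eval x = 0 := by
  intro j
  induction j with
  | zero => intro _ q hq; simp at hq; simp [hq]
  | succ j ih =>
    intro hj q hq
    have hv : ∀ c : ℝ, (X - C c) ^ n ∣ ((X - C 1) ^ n * (X + C 1) ^ n : ℝ[X]) →
        (derivative^[j] ((X - C 1) ^ n * (X + C 1) ^ n : ℝ[X])).eval c = 0 := by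
      intro c hc
      have := pow_sub_dvd_iterate_derivative_of_pow_dvd j hc
      have h2 := (dvd_pow_self (X - C c) (by omega : n - j ≠ 0)).trans this
      exact dvd_iff_isRoot.mp h2
    have h1 := hv 1 (dvd_mul_right _ _)
    have h2 := hv (-1) (by
      have : (X - C (-1) : ℝ[X]) = X + C 1 := by simp
      rw [this]; exact dvd_mul_left _ _)
    rw [Function.iterate_succ_apply', poly_ibp, h1, h2, ih (by omega) (derivative q)]
    · simp
    · rwa [← Function.iterate_succ_apply]

open Polynomial in
lemma legL_orth (n : ℕ) :
    ∫ x in (-1 : ℝ)..1, (derivative (derivative (legL n))).eval x * (legL n).eval x = 0 := by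
  have hdeg : ((X - C 1) ^ n * (X + C 1) ^ n : ℝ[X]).natDegree ≤ 2 * n := by
    refine natDegree_mul_le.trans ?_
    rw [natDegree_pow, natDegree_pow, natDegree_X_sub_C, natDegree_X_add_C]; omega
  have hf : (n.factorial : ℝ) ≠ 0 := by positivity
  have key := rod_orth n n le_rfl (derivative (derivative (legL n))) (by
    have h : C (n.factorial : ℝ) * derivative^[n] (derivative (derivative (legL n))) = 0 := by
      rw [← iterate_derivative_C_mul, ← derivative_C_mul, ← derivative_C_mul, legL_rodrigues,
        ← Function.iterate_succ_apply, ← Function.iterate_succ_apply, ← Function.iterate_add_apply]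
      apply iterate_derivative_eq_zero
      omega
    exact (mul_eq_zero.mp h).resolve_left (by simpa using hf))
  rw [← legL_rodrigues] at key
  simp only [eval_mul, eval_C] at key
  have : ∀ x : ℝ, (derivative (derivative (legL n))).eval x * ((n.factorial : ℝ) * (legL n).eval x)
      = (n.factorial : ℝ) * ((derivative (derivative (legL n))).eval x * (legL n).eval x) := by
    intro x; ring
  simp only [this] at key
  rw [intervalIntegral.integral_const_mul] at key
  exact (mul_eq_zero.mp key).resolve_left hf

open Polynomial in
lemma legL_eval_one (n : ℕ) : (legL n).eval 1 = 2 ^ n := by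
  rw [legL, Finset.sum_range_succ']
  simp [eval_finsetSum]
  norm_num

open Polynomial in
lemma legL_deriv_one (n : ℕ) :
    (derivative (legL n)).eval 1 = 2 ^ n * ((n : ℝ) * (n + 1) / 2) := by
  rcases n with _ | n
  · simp [legL]
  rw [legL, Finset.sum_range_succ', Finset.sum_range_succ']
  simp only [derivative_add, derivative_sum, eval_add, eval_finsetSum, derivative_mul,
    derivative_pow, derivative_C, eval_mul, eval_pow]
  simp
  have : (1 : ℝ) + 1 = 2 := by norm_num
  rw [this]
  ring

open Polynomial in
lemma legL_neg (n : ℕ) : (legL n).comp (-X) = C ((-1) ^ n) * legL n := by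
  rw [legL]
  conv_rhs => rw [← Finset.sum_range_reflect]
  rw [Finset.mul_sum, ← coe_compRingHom_apply, map_sum]
  refine Finset.sum_congr rfl fun k hk => ?_
  have hk' : k ≤ n := by simpa [Nat.lt_succ_iff] using hk
  have e : n + 1 - 1 - k = n - k := by omega
  rw [e, Nat.sub_sub_self hk', Nat.choose_symm hk', coe_compRingHom_apply]
  simp only [mul_comp, C_comp, pow_comp, sub_comp, add_comp, X_comp]
  have h1 : (-X - C 1 : ℝ[X]) = -1 * (X + C 1) := by ring
  have h2 : (-X + C 1 : ℝ[X]) = -1 * (X - C 1) := by ring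
  obtain ⟨m, rfl⟩ := Nat.exists_eq_add_of_le hk'
  rw [h1, h2, mul_pow, mul_pow]
  simp only [Nat.add_sub_cancel_left, map_pow, map_neg, map_one]
  ring

open Polynomial in
lemma legL_int (n : ℕ) :
    ∫ x in (-1 : ℝ)..1, ((derivative (legL n)).eval x) ^ 2 = 4 ^ n * ((n : ℝ) * (n + 1)) := by
  have h := poly_ibp (derivative (legL n)) (legL n)
  rw [legL_orth] at h
  have e1 := congrArg (eval 1) (legL_neg n)
  have e2 := congrArg (fun p => eval 1 (derivative p)) (legL_neg n)
  simp only [derivative_comp, derivative_C_mul, eval_comp, eval_mul, eval_neg, eval_X, eval_C,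
    derivative_neg, derivative_X, eval_one] at e1 e2
  have e3 : (derivative (legL n)).eval (-1) * (legL n).eval (-1)
      = -((derivative (legL n)).eval 1 * (legL n).eval 1) := by
    have e4 : (derivative (legL n)).eval (-1) = - ((-1) ^ n * (derivative (legL n)).eval 1) := by
      linarith
    have e5 : ((-1 : ℝ) ^ n) * (-1) ^ n = 1 := by rw [← mul_pow]; norm_num
    rw [e1, e4]
    linear_combination (-((derivative (legL n)).eval 1 * (legL n).eval 1)) * e5
  simp only [pow_two]
  rw [h, e3, legL_eval_one, legL_deriv_one]
  have : (4 : ℝ) ^ n = 2 ^ n * 2 ^ n := by rw [← mul_pow]; norm_num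
  rw [this]; ring

lemma jacobiP_eq (n : ℕ) (x : ℝ) : jacobiP 0 0 n x = (legL n).eval x / 2 ^ n := by
  rw [jacobiP, legL, Polynomial.eval_finsetSum, Finset.sum_div]
  refine Finset.sum_congr rfl fun k hk => ?_
  have hk' : k ≤ n := by simpa [Nat.lt_succ_iff] using hk
  have e : (n : ℝ) + 0 - k + 1 = ((n - k : ℕ) : ℝ) + 1 := by push_cast [hk']; ring
  have e' : (0 : ℝ) + k + 1 = (k : ℝ) + 1 := by ring
  rw [e, e', add_zero, Real.Gamma_nat_eq_factorial, Real.Gamma_nat_eq_factorial,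
    Real.Gamma_nat_eq_factorial]
  have hc : (n.choose k : ℝ) = n.factorial / (k.factorial * (n - k).factorial) :=
    Nat.cast_choose ℝ hk'
  have hp : (2 : ℝ) ^ n = 2 ^ k * 2 ^ (n - k) := by rw [← pow_add]; congr 1; omega
  simp only [Polynomial.eval_mul, Polynomial.eval_C, Polynomial.eval_pow, Polynomial.eval_sub,
    Polynomial.eval_add, Polynomial.eval_X]
  rw [hc, hp, div_pow, div_pow]
  field_simp

lemma jacobih_eq (n : ℕ) : jacobih 0 0 n = 2 / (2 * (n : ℝ) + 1) := by
  have hf : (n.factorial : ℝ) ≠ 0 := by positivity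
  simp only [jacobih, add_zero, zero_add, Real.rpow_one, Real.Gamma_nat_eq_factorial]
  field_simp

lemma jacobiρ_eq (n : ℕ) : jacobiρ 0 0 n =
    fun x => (2 * (n : ℝ) + 1) / (2 * 4 ^ n) * (legL n).eval x ^ 2 := by
  funext x
  have : (4 : ℝ) ^ n = 2 ^ n * 2 ^ n := by rw [← mul_pow]; norm_num
  rw [jacobiρ, jacobiP_eq, jacobih_eq, Real.rpow_zero, Real.rpow_zero, this]
  field_simp

/-- For every `n ∈ ℕ`, the Fisher information of the Rakhmanov density of
the orthonormal Jacobi polynomial with `α = β = 0` (the orthonormal Legendre case) equals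
`2n(n+1)(2n+1)`. -/
theorem jacobi_fisher_legendre (n : ℕ) :
    (∫ x in Set.Ioo (-1 : ℝ) 1, (deriv (jacobiρ 0 0 n) x) ^ 2 / jacobiρ 0 0 n x) =
      2 * (n : ℝ) * ((n : ℝ) + 1) * (2 * (n : ℝ) + 1) := by
  set c : ℝ := (2 * (n : ℝ) + 1) / (2 * 4 ^ n) with hc
  have hcpos : 0 < c := by positivity
  have hne : legL n ≠ 0 := by
    intro h
    have := legL_eval_one n
    rw [h] at this
    simp at this
    exact absurd this.symm (by positivity)
  have hd : ∀ x, deriv (jacobiρ 0 0 n) x =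
      c * (2 * (legL n).eval x * (legL n).derivative.eval x) := by
    intro x
    rw [jacobiρ_eq]
    have := (((legL n).hasDerivAt x).pow 2).const_mul c
    refine (this.congr_deriv ?_).deriv
    push_cast
    ring
  have hfin : {x : ℝ | (legL n).eval x = 0}.Finite :=
    (legL n).finite_setOfPred_isRoot hne
  have hae : ∀ᵐ x ∂(volume.restrict (Set.Ioo (-1 : ℝ) 1)),
      (deriv (jacobiρ 0 0 n) x) ^ 2 / jacobiρ 0 0 n x
        = 4 * c * ((legL n).derivative.eval x) ^ 2 := by
    apply ae_restrict_of_ae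
    filter_upwards [hfin.countable.ae_notMem volume] with x hx
    have hx' : (legL n).eval x ≠ 0 := hx
    rw [hd, jacobiρ_eq]
    simp only [← hc]
    field_simp
    try ring
  rw [integral_congr_ae hae, integral_const_mul, ← integral_Ioc_eq_integral_Ioo,
    ← intervalIntegral.integral_of_le (by norm_num), legL_int, hc]
  field_simp
  try ring
end

section
/- For every n ∈ ℕ and every k ∈ ℕ, the k-th moment of the Rakhmanov density of the orthonormal Hermite polynomial is ⟨x^k⟩_n = 0 when k is odd, and ⟨x^k⟩_n = ( k! / ( 2^k Γ(k/2 + 1) ) ) · Σ_{j=0}^{n} ( (−n)_j (−k/2)_j / (j!)² ) 2^j when k is even, where (a)_j denotes the Pochhammer symbol (the finite sum is the terminating hypergeometric series ₂F₁(−n, −k/2; 1; 2)). -/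
open MeasureTheory Real

/-- The physicists' Hermite polynomial `H_n`. -/
noncomputable def hermiteH : ℕ → ℝ → ℝ
  | 0, _ => 1
  | 1, x => 2 * x
  | (n + 2), x => 2 * x * hermiteH (n + 1) x - 2 * ((n : ℝ) + 1) * hermiteH n x

/-- The Rakhmanov density of the orthonormal Hermite polynomial
`p_n(x) = (2^n n! √π)^{-1/2} H_n(x)`, i.e. `ρ_n(x) = p_n(x)^2 e^{-x²}`. -/
noncomputable def hermiteρ (n : ℕ) (x : ℝ) : ℝ :=
  (hermiteH n x) ^ 2 * Real.exp (-x ^ 2) / (2 ^ n * (n.factorial : ℝ) * Real.sqrt π)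

/-- The Pochhammer symbol `(a)_j = a(a+1)⋯(a+j−1)`, with `(a)_0 = 1`. -/
noncomputable def poch (a : ℝ) (j : ℕ) : ℝ :=
  ∏ i ∈ Finset.range j, (a + (i : ℝ))

open Polynomial in
/-- Hermite polynomials as polynomials. -/
noncomputable def hermP : ℕ → Polynomial ℝ
  | 0 => 1
  | 1 => 2 * X
  | (n + 2) => 2 * X * hermP (n + 1) - C (2 * ((n : ℝ) + 1)) * hermP n

theorem hermP_eval : ∀ (n : ℕ) (x : ℝ), (hermP n).eval x = hermiteH n x
  | 0, x => by simp [hermP, hermiteH]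
  | 1, x => by simp [hermP, hermiteH]
  | (n + 2), x => by
    have h1 := hermP_eval (n + 1) x
    have h2 := hermP_eval n x
    simp [hermP, hermiteH, h1, h2]

theorem hermiteH_neg : ∀ (n : ℕ) (x : ℝ), hermiteH n (-x) = (-1) ^ n * hermiteH n x
  | 0, x => by simp [hermiteH]
  | 1, x => by simp [hermiteH]
  | (n + 2), x => by
    have h1 := hermiteH_neg (n + 1) x
    have h2 := hermiteH_neg n x
    simp only [hermiteH, h1, h2]
    ring

open Polynomial in
theorem hermP_deriv : ∀ (n : ℕ),
    derivative (hermP (n + 1)) = C (2 * ((n : ℝ) + 1)) * hermP n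
  | 0 => by simp [hermP, C_ofNat]
  | 1 => by
    simp only [hermP]
    simp
    ring_nf
    rw [show (C 2 : Polynomial ℝ) = 2 from rfl]
    ring
  | (n + 2) => by
    have h1 := hermP_deriv (n + 1)
    have h2 := hermP_deriv n
    have e : hermP (n + 2) = 2 * X * hermP (n + 1) - C (2 * ((n : ℝ) + 1)) * hermP n := by
      simp [hermP]
    have e3 : hermP (n + 2 + 1) =
        2 * X * hermP (n + 2) - C (2 * (((n + 1 : ℕ) : ℝ) + 1)) * hermP (n + 1) := by
      rw [hermP]
    rw [e3]
    simp only [derivative_sub, derivative_mul, derivative_C, derivative_X, h1, h2,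
      derivative_ofNat]
    rw [e]
    simp only [C_mul, C_add, C_1, Nat.cast_add, Nat.cast_one, Nat.cast_ofNat, C_ofNat]
    ring

theorem poly_integrable (P : Polynomial ℝ) :
    Integrable (fun x : ℝ => P.eval x * Real.exp (-x ^ 2)) := by
  induction P using Polynomial.induction_on' with
  | add p q hp hq =>
    simp only [Polynomial.eval_add, add_mul]
    exact hp.add hq
  | monomial n a =>
    have := (integrable_rpow_mul_exp_neg_mul_sq (b := 1) one_pos (s := (n : ℝ))
      (by linarith [Nat.cast_nonneg (α := ℝ) n])).const_mul a
    refine this.congr (Filter.Eventually.of_forall fun x => ?_)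
    simp [Real.rpow_natCast, mul_assoc]

open Polynomial in
theorem poly_ibp_s17 (P : Polynomial ℝ) :
    ∫ x : ℝ, (derivative P - 2 * X * P).eval x * Real.exp (-x ^ 2) = 0 := by
  refine integral_eq_zero_of_hasDerivAt_of_integrable (f := fun x => P.eval x * Real.exp (-x ^ 2))
    (fun x => ?_) (poly_integrable _) (poly_integrable _)
  have h := (P.hasDerivAt x).mul (((hasDerivAt_id x).pow 2).neg.exp)
  refine h.congr_deriv ?_
  simp
  ring

/-- Unnormalised moments. -/
noncomputable def mom (n k : ℕ) : ℝ := ∫ x : ℝ, x ^ k * hermiteH n x ^ 2 * Real.exp (-x ^ 2)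

theorem mom_def (n k : ℕ) :
    mom n k = ∫ x : ℝ, x ^ k * hermiteH n x ^ 2 * Real.exp (-x ^ 2) := rfl

theorem mom_integrable (n k : ℕ) :
    Integrable (fun x : ℝ => x ^ k * hermiteH n x ^ 2 * Real.exp (-x ^ 2)) := by
  have := poly_integrable (Polynomial.X ^ k * hermP n ^ 2)
  simpa [hermP_eval] using this

theorem hermH_succ_deriv (n : ℕ) (x : ℝ) :
    (Polynomial.derivative (hermP (n + 1))).eval x = 2 * ((n : ℝ) + 1) * hermiteH n x := by
  rw [hermP_deriv]; simp [hermP_eval]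

theorem hermH_deriv (n : ℕ) (x : ℝ) :
    (Polynomial.derivative (hermP n)).eval x = 2 * x * hermiteH n x - hermiteH (n + 1) x := by
  cases n with
  | zero => simp [hermP, hermiteH]
  | succ n => rw [hermH_succ_deriv]; simp [hermiteH]

theorem mom_rec (n k : ℕ) :
    2 * (mom (n + 1) (k + 2) - 2 * ((n : ℝ) + 1) * mom n (k + 2)) =
      ((k : ℝ) + 1) * (mom (n + 1) k + 2 * ((n : ℝ) + 1) * mom n k) := by
  have h := poly_ibp_s17 (Polynomial.X ^ (k + 1) *
    (hermP (n + 1) ^ 2 + Polynomial.C (2 * ((n : ℝ) + 1)) * hermP n ^ 2))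
  have e : ∫ x : ℝ, (((k : ℝ) + 1) * (x ^ k * hermiteH (n + 1) x ^ 2 * Real.exp (-x ^ 2))
      + ((k : ℝ) + 1) * (2 * ((n : ℝ) + 1)) * (x ^ k * hermiteH n x ^ 2 * Real.exp (-x ^ 2))
      + (-2) * (x ^ (k + 2) * hermiteH (n + 1) x ^ 2 * Real.exp (-x ^ 2))
      + 2 * (2 * ((n : ℝ) + 1)) * (x ^ (k + 2) * hermiteH n x ^ 2 * Real.exp (-x ^ 2))) = 0 := by
    rw [← h]
    congr 1
    ext x
    simp only [Polynomial.derivative_mul, Polynomial.derivative_add, Polynomial.derivative_pow,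
      Polynomial.derivative_C, Polynomial.derivative_X,
      Polynomial.eval_sub, Polynomial.eval_add, Polynomial.eval_mul, Polynomial.eval_pow,
      Polynomial.eval_C, Polynomial.eval_X, Polynomial.eval_one, Polynomial.eval_ofNat,
      Polynomial.eval_zero, hermH_succ_deriv, hermH_deriv n, hermP_eval]
    push_cast
    ring
  rw [integral_add, integral_add, integral_add, integral_const_mul, integral_const_mul,
    integral_const_mul, integral_const_mul] at e
  · simp only [← mom_def] at e
    linarith
  all_goals
    have i1 := mom_integrable n k
    have i2 := mom_integrable n (k + 2)
    have i3 := mom_integrable (n + 1) k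
    have i4 := mom_integrable (n + 1) (k + 2)
    first
    | exact Integrable.const_mul (by assumption) _
    | exact (i3.const_mul _).add (i1.const_mul _)
    | exact ((i3.const_mul _).add (i1.const_mul _)).add (i4.const_mul _)

theorem mom_succ_zero (n : ℕ) : mom (n + 1) 0 = 2 * ((n : ℝ) + 1) * mom n 0 := by
  have h := poly_ibp_s17 (hermP n * hermP (n + 1))
  have e : ∫ x : ℝ, ((2 * ((n : ℝ) + 1)) * (x ^ 0 * hermiteH n x ^ 2 * Real.exp (-x ^ 2))
      + (-1) * (x ^ 0 * hermiteH (n + 1) x ^ 2 * Real.exp (-x ^ 2))) = 0 := by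
    rw [← h]
    congr 1
    ext x
    simp only [Polynomial.derivative_mul, 
      Polynomial.eval_sub, Polynomial.eval_add, Polynomial.eval_mul, 
      Polynomial.eval_X, Polynomial.eval_ofNat,
      hermH_succ_deriv, hermH_deriv n, hermP_eval]
    ring
  rw [integral_add ((mom_integrable n 0).const_mul _) ((mom_integrable (n + 1) 0).const_mul _),
    integral_const_mul, integral_const_mul] at e
  simp only [← mom_def] at e
  linarith

theorem mom_zero_zero : mom 0 0 = Real.sqrt π := by
  have := integral_gaussian 1
  simpa [mom, hermiteH] using this

theorem mom_zero_succ (k : ℕ) : 2 * mom 0 (k + 2) = ((k : ℝ) + 1) * mom 0 k := by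
  have h := poly_ibp_s17 (Polynomial.X ^ (k + 1))
  have e : ∫ x : ℝ, (((k : ℝ) + 1) * (x ^ k * hermiteH 0 x ^ 2 * Real.exp (-x ^ 2))
      + (-2) * (x ^ (k + 2) * hermiteH 0 x ^ 2 * Real.exp (-x ^ 2))) = 0 := by
    rw [← h]
    congr 1
    ext x
    simp [hermiteH]
    ring
  rw [integral_add ((mom_integrable 0 k).const_mul _) ((mom_integrable 0 (k + 2)).const_mul _),
    integral_const_mul, integral_const_mul] at e
  simp only [← mom_def] at e
  linarith

/-- Delannoy numbers. -/
noncomputable def dela (n m : ℕ) : ℝ :=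
  ∑ j ∈ Finset.range (n + 1), (n.choose j : ℝ) * (m.choose j : ℝ) * 2 ^ j

theorem dela_rec (n m : ℕ) :
    dela (n + 1) (m + 1) = dela n (m + 1) + dela (n + 1) m + dela n m := by
  have ext1 : ∀ m, dela n m =
      ∑ j ∈ Finset.range (n + 2), (n.choose j : ℝ) * (m.choose j : ℝ) * 2 ^ j := by
    intro m
    rw [Finset.sum_range_succ, Nat.choose_succ_self]
    simp [dela]
  have key : ∀ N : ℕ, ∑ j ∈ Finset.range (N + 1),
      (((n + 1).choose j : ℝ) * ((m + 1).choose j : ℝ) * 2 ^ j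
        - (n.choose j : ℝ) * ((m + 1).choose j : ℝ) * 2 ^ j
        - ((n + 1).choose j : ℝ) * (m.choose j : ℝ) * 2 ^ j
        - (n.choose j : ℝ) * (m.choose j : ℝ) * 2 ^ j)
      = - (2 ^ (N + 1) * (n.choose N : ℝ) * (m.choose N : ℝ)) := by
    intro N
    induction N with
    | zero => simp; norm_num
    | succ N ih =>
      rw [Finset.sum_range_succ, ih]
      simp only [Nat.choose_succ_succ', Nat.cast_add]
      ring
  have k := key (n + 1)
  rw [Nat.choose_succ_self] at k
  simp only [Finset.sum_sub_distrib] at k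
  rw [ext1, ext1]
  unfold dela
  simp only [Nat.cast_zero, mul_zero, zero_mul, neg_zero] at k
  linarith

theorem dela_zero_left (m : ℕ) : dela 0 m = 1 := by simp [dela]

theorem dela_zero_right (n : ℕ) : dela n 0 = 1 := by
  simp [dela, Finset.sum_range_succ']

theorem mom_eq (n m : ℕ) : mom n (2 * m) =
    2 ^ n * (n.factorial : ℝ) * Real.sqrt π * mom 0 (2 * m) / Real.sqrt π * dela n m := by
  have hpi : Real.sqrt π ≠ 0 := (Real.sqrt_pos.mpr Real.pi_pos).ne'
  induction n generalizing m with
  | zero => simp [dela_zero_left]; field_simp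
  | succ n ihn =>
    induction m with
    | zero =>
      have := ihn 0
      simp only [mul_zero, dela_zero_right] at this ⊢
      rw [mom_succ_zero, this, Nat.factorial_succ]
      push_cast
      ring
    | succ m ihm =>
      have h := mom_rec n (2 * m)
      have h0 := mom_zero_succ (2 * m)
      have e1 := ihn (m + 1)
      have e2 := ihn m
      rw [show 2 * (m + 1) = 2 * m + 2 from rfl] at e1 ⊢
      have h0' : mom 0 (2 * m + 2) = (((2 * m : ℕ) : ℝ) + 1) * mom 0 (2 * m) / 2 := by linarith
      rw [h0'] at e1 ⊢
      have h' : mom (n + 1) (2 * m + 2) = 2 * ((n : ℝ) + 1) * mom n (2 * m + 2) +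
        (((2 * m : ℕ) : ℝ) + 1) * (mom (n + 1) (2 * m) + 2 * ((n : ℝ) + 1) * mom n (2 * m)) / 2 := by
        linarith
      rw [h', e1, e2, ihm, dela_rec, Nat.factorial_succ]
      push_cast
      field_simp
      ring

theorem mom_zero_eq (m : ℕ) :
    mom 0 (2 * m) = Real.sqrt π * ((2 * m).factorial : ℝ) / (2 ^ (2 * m) * (m.factorial : ℝ)) := by
  induction m with
  | zero => simp [mom_zero_zero]
  | succ m ih =>
    have h0 := mom_zero_succ (2 * m)
    have h0' : mom 0 (2 * m + 2) = (((2 * m : ℕ) : ℝ) + 1) * mom 0 (2 * m) / 2 := by linarith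
    rw [show 2 * (m + 1) = 2 * m + 2 from rfl, h0', ih, Nat.factorial_succ (2 * m + 1),
      Nat.factorial_succ (2 * m), Nat.factorial_succ m]
    have := Nat.factorial_ne_zero m
    push_cast
    field_simp
    ring

theorem poch_neg (n j : ℕ) : poch (-(n : ℝ)) j = (-1) ^ j * (j.factorial : ℝ) * (n.choose j : ℝ) := by
  induction j with
  | zero => simp [poch]
  | succ j ih =>
    have h : poch (-(n : ℝ)) (j + 1) = poch (-(n : ℝ)) j * (-(n : ℝ) + j) := by
      simp [poch, Finset.prod_range_succ]
    rw [h, ih, Nat.factorial_succ]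
    have hc : (n.choose (j + 1) : ℝ) * ((j : ℝ) + 1) = (n.choose j : ℝ) * ((n : ℝ) - j) := by
      rcases le_or_gt j n with hj | hj
      · have := Nat.choose_succ_right_eq n j
        rw [← Nat.cast_sub hj]
        exact_mod_cast this
      · rw [Nat.choose_eq_zero_of_lt hj, Nat.choose_eq_zero_of_lt (by omega)]; simp
    push_cast
    linear_combination (-1) ^ j * (j.factorial : ℝ) * hc

theorem moment_eq (n k : ℕ) : (∫ x : ℝ, x ^ k * hermiteρ n x) =
    mom n k / (2 ^ n * (n.factorial : ℝ) * Real.sqrt π) := by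
  rw [mom, ← integral_div]
  congr 1
  ext x
  rw [hermiteρ]
  ring

/-- For every `n, k ∈ ℕ`, the `k`-th moment of the Rakhmanov density of
the orthonormal Hermite polynomial vanishes for odd `k`, and for even `k` equals
`(k!/(2^k Γ(k/2+1))) · Σ_{j=0}^n ((−n)_j (−k/2)_j/(j!)²) 2^j`
(the terminating series `₂F₁(−n, −k/2; 1; 2)`). -/
theorem hermite_moments (n k : ℕ) :
    (Odd k → (∫ x : ℝ, x ^ k * hermiteρ n x) = 0) ∧
    (Even k → (∫ x : ℝ, x ^ k * hermiteρ n x) =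
      (k.factorial : ℝ) / (2 ^ k * Real.Gamma ((k : ℝ) / 2 + 1)) *
        ∑ j ∈ Finset.range (n + 1),
          poch (-(n : ℝ)) j * poch (-(k : ℝ) / 2) j / ((j.factorial : ℝ)) ^ 2 * 2 ^ j) := by
  refine ⟨fun hk => ?_, fun hk => ?_⟩
  · have h := integral_neg_eq_self (fun x : ℝ => x ^ k * hermiteρ n x) volume
    have e : (fun x : ℝ => (-x) ^ k * hermiteρ n (-x)) = fun x => -(x ^ k * hermiteρ n x) := by
      ext x
      have hs : ((-1 : ℝ) ^ n) ^ 2 = 1 := by rw [← pow_mul, mul_comm, pow_mul]; simp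
      rw [hk.neg_pow, hermiteρ, hermiteρ, hermiteH_neg, mul_pow, hs, neg_sq]
      ring
    rw [e, integral_neg] at h
    linarith
  · obtain ⟨m, rfl⟩ := hk
    rw [← two_mul, moment_eq, mom_eq, mom_zero_eq]
    have c1 : (((2 * m : ℕ) : ℝ) / 2) = m := by push_cast; ring
    have c2 : -((2 * m : ℕ) : ℝ) / 2 = -(m : ℝ) := by push_cast; ring
    rw [c1, c2, Real.Gamma_nat_eq_factorial]
    have hs : ∑ j ∈ Finset.range (n + 1),
        poch (-(n : ℝ)) j * poch (-(m : ℝ)) j / ((j.factorial : ℝ)) ^ 2 * 2 ^ j = dela n m := by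
      refine Finset.sum_congr rfl fun j _ => ?_
      have hj : (j.factorial : ℝ) ≠ 0 := by exact_mod_cast Nat.factorial_ne_zero j
      have hs : ((-1 : ℝ) ^ j) * (-1) ^ j = 1 := by rw [← mul_pow]; simp
      rw [poch_neg, poch_neg]
      field_simp
      rw [sq, hs]; ring
    rw [hs]
    have hpi : Real.sqrt π ≠ 0 := (Real.sqrt_pos.mpr Real.pi_pos).ne'
    have hn : (n.factorial : ℝ) ≠ 0 := by exact_mod_cast Nat.factorial_ne_zero n
    have hm : (m.factorial : ℝ) ≠ 0 := by exact_mod_cast Nat.factorial_ne_zero m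
    field_simp
end
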